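/- Let m ≥ 2, let i be an even index with 1 < i < 2m, and let n ∈ ℤ. Then the two vectors v = (0,…,0, 2n, 1,…,1) ∈ ℤ^{2m} (whose first i−1 entries are 0, whose i-th entry is 2n, and whose last 2m−i entries are 1) and v' = (0,…,0, n, 1−n, 1,…,1) ∈ ℤ^{2m} (whose first i−1 entries are 0, whose i-th entry is n, whose (i+1)-st entry is 1−n, and whose last 2m−i−1 entries are 1) are Hurwitz equivalent. In particular Δ(v) = Δ(v') = −2n, d(v) = d(v') = 1, and M(v) = M(v') = {0,…,0 (i times), 1,…,1 (2m−i times) (mod 2)}. -/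

import Mathlib

/-- The alternating sum `Δ(v) = Σ (−1)^{i−1} v_i` (0-indexed: `Σ (−1)^i v_i`). -/
def altSum {n : ℕ} (v : Fin n → ℤ) : ℤ := ∑ i : Fin n, (-1 : ℤ) ^ (i : ℕ) * v i

/-- A vector is trivial if all its entries are equal. -/
def IsTrivialVec {n : ℕ} (v : Fin n → ℤ) : Prop := ∀ i j, v i = v j

/-- `d(v)`: the (nonnegative) greatest common divisor of all differences of entries. -/
def dval {n : ℕ} (v : Fin n → ℤ) : ℕ :=
  (Finset.univ : Finset (Fin n × Fin n)).gcd fun p => (v p.1 - v p.2).natAbs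

/-- `k(v)`: the 2-adic valuation of `d(v)`. -/
def kval {n : ℕ} (v : Fin n → ℤ) : ℕ := padicValNat 2 (dval v)

/-- The multiset of residues of the entries of `v` modulo `2d`. -/
def MresMod {n : ℕ} (v : Fin n → ℤ) (d : ℕ) : Multiset ℤ :=
  (Finset.univ.val : Multiset (Fin n)).map fun i => v i % (2 * (d : ℤ))

/-- `M(v)`: the multiset of residues of the entries of `v` modulo `2d(v)`. -/
def Mres {n : ℕ} (v : Fin n → ℤ) : Multiset ℤ := MresMod v (dval v)

/-- `v'` is obtained from `v` by an elementary Hurwitz move `σ_i`: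
`(v_i, v_{i+1}) ↦ (v_{i+1}, 2v_{i+1} − v_i)`, all other entries unchanged. -/
def IsHurwitzMove {n : ℕ} (v v' : Fin n → ℤ) : Prop :=
  ∃ (i : ℕ) (hi : i + 1 < n),
    v' ⟨i, Nat.lt_of_succ_lt hi⟩ = v ⟨i + 1, hi⟩ ∧
    v' ⟨i + 1, hi⟩ = 2 * v ⟨i + 1, hi⟩ - v ⟨i, Nat.lt_of_succ_lt hi⟩ ∧
    ∀ j : Fin n, (j : ℕ) ≠ i → (j : ℕ) ≠ i + 1 → v' j = v j

/-- Hurwitz equivalence: a finite sequence of elementary Hurwitz moves and inverses. -/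
def HurwitzEquiv {n : ℕ} (v w : Fin n → ℤ) : Prop :=
  Relation.ReflTransGen (fun a b => IsHurwitzMove a b ∨ IsHurwitzMove b a) v w

/-!
Write `σ_p` for the move on positions `p`, `p + 1`. It preserves the difference of the two
entries, so `σ_p ^ k (a, b) = (a + k (b - a), b + k (b - a))` for every integer `k`. On three
consecutive entries this gives, with `δ = y - x`,
`(x, x + 2cδ, y) → (x - 2cδ, x, y) → (x - 2cδ, x - cδ, y - cδ) → (x, x + cδ, y - cδ)`
by `σ_p⁻¹`, `σ_{p+1} ^ (-c)` and `σ_p ^ 2`; the theorem is the case `x = 0`, `y = 1`.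
Moreover `Δ`, `d` and `M` are Hurwitz invariants, as `2b - a ≡ a` modulo `2d` when `d ∣ b - a`,
so it suffices to compute them for the first vector.
-/

section HurwitzInvariants

variable {n : ℕ} {v w : Fin n → ℤ}

/-- The power `σ_p ^ k` of the elementary Hurwitz move on the positions `p` and `q = p + 1`, in
closed form. The adjacency of `p` and `q` is not built in. -/
def hurwitzPow (p q : Fin n) (k : ℤ) (v : Fin n → ℤ) : Fin n → ℤ :=
  fun j => if j = p ∨ j = q then v j + k * (v q - v p) else v j

theorem hurwitzPow_apply_left (p q : Fin n) (k : ℤ) (v : Fin n → ℤ) :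
    hurwitzPow p q k v p = v p + k * (v q - v p) :=
  if_pos (.inl rfl)

theorem hurwitzPow_apply_right (p q : Fin n) (k : ℤ) (v : Fin n → ℤ) :
    hurwitzPow p q k v q = v q + k * (v q - v p) :=
  if_pos (.inr rfl)

theorem hurwitzPow_apply_of_ne {p q j : Fin n} (hjp : j ≠ p) (hjq : j ≠ q) (k : ℤ)
    (v : Fin n → ℤ) : hurwitzPow p q k v j = v j :=
  if_neg (not_or.2 ⟨hjp, hjq⟩)

theorem hurwitzPow_zero (p q : Fin n) (v : Fin n → ℤ) : hurwitzPow p q 0 v = v := by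
  funext j
  simp [hurwitzPow]

theorem hurwitzPow_add (p q : Fin n) (k l : ℤ) (v : Fin n → ℤ) :
    hurwitzPow p q (k + l) v = hurwitzPow p q k (hurwitzPow p q l v) := by
  funext j
  simp only [hurwitzPow, true_or, or_true, if_true]
  split_ifs <;> ring

theorem isHurwitzMove_iff :
    IsHurwitzMove v w ↔ ∃ p q : Fin n, (p : ℕ) + 1 = q ∧ w = hurwitzPow p q 1 v := by
  constructor
  · rintro ⟨p, hp, hwp, hwq, hw⟩
    refine ⟨⟨p, by omega⟩, ⟨p + 1, hp⟩, rfl, funext fun j => ?_⟩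
    by_cases hjp : (j : ℕ) = p
    · subst hjp
      rw [hwp, hurwitzPow_apply_left]
      ring
    by_cases hjq : (j : ℕ) = p + 1
    · obtain rfl : j = ⟨p + 1, hp⟩ := Fin.ext hjq
      rw [hwq, hurwitzPow_apply_right]
      ring
    rw [hw j hjp hjq, hurwitzPow_apply_of_ne (Fin.ne_of_val_ne hjp) (Fin.ne_of_val_ne hjq)]
  · rintro ⟨p, ⟨q, hq⟩, hpq, rfl⟩
    obtain rfl : (p : ℕ) + 1 = q := hpq
    refine ⟨p, hq, ?_, ?_, fun j hjp hjq =>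
      hurwitzPow_apply_of_ne (Fin.ne_of_val_ne hjp) (Fin.ne_of_val_ne hjq) 1 v⟩
    · rw [Fin.eta, hurwitzPow_apply_left]
      ring
    · rw [Fin.eta, hurwitzPow_apply_right]
      ring

theorem hurwitzEquiv_hurwitzPow {p q : Fin n} (hpq : (p : ℕ) + 1 = q) (k : ℤ) (v : Fin n → ℤ) :
    HurwitzEquiv v (hurwitzPow p q k v) := by
  have move_succ (l : ℤ) : IsHurwitzMove (hurwitzPow p q l v) (hurwitzPow p q (1 + l) v) :=
    isHurwitzMove_iff.2 ⟨p, q, hpq, hurwitzPow_add p q 1 l v⟩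
  induction k with
  | zero => rw [hurwitzPow_zero]; exact .refl
  | succ k ih => exact ih.tail (.inl (add_comm 1 (k : ℤ) ▸ move_succ k))
  | pred k ih => exact ih.tail (.inr (by simpa using move_succ (-k - 1)))

theorem HurwitzEquiv.of_middle_eq {p q r : Fin n} (hpq : (p : ℕ) + 1 = q) (hqr : (q : ℕ) + 1 = r)
    {c : ℤ} (hvq : v q = v p + 2 * c * (v r - v p)) (hwp : w p = v p)
    (hwq : w q = v p + c * (v r - v p)) (hwr : w r = v r - c * (v r - v p))
    (hw : ∀ j, j ≠ p → j ≠ q → j ≠ r → w j = v j) : HurwitzEquiv v w := by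
  have hpq_ne : p ≠ q := by omega
  have hqr_ne : q ≠ r := by omega
  have hpr_ne : p ≠ r := by omega
  let v₁ := hurwitzPow p q (-1) v
  let v₂ := hurwitzPow q r (-c) v₁
  have hv₁p : v₁ p = v p - 2 * c * (v r - v p) := by
    simp only [v₁, hurwitzPow_apply_left, hvq]; ring
  have hv₁q : v₁ q = v p := by
    simp only [v₁, hurwitzPow_apply_right]; ring
  have hv₁r : v₁ r = v r := hurwitzPow_apply_of_ne hpr_ne.symm hqr_ne.symm _ _
  have hv₂p : v₂ p = v p - 2 * c * (v r - v p) :=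
    (hurwitzPow_apply_of_ne hpq_ne hpr_ne _ _).trans hv₁p
  have hv₂q : v₂ q = v p - c * (v r - v p) := by
    simp only [v₂, hurwitzPow_apply_left, hv₁q, hv₁r]; ring
  have hv₂r : v₂ r = v r - c * (v r - v p) := by
    simp only [v₂, hurwitzPow_apply_right, hv₁q, hv₁r]; ring
  have hw_eq : hurwitzPow p q 2 v₂ = w := by
    funext j
    rcases eq_or_ne j p with rfl | hjp
    · rw [hurwitzPow_apply_left, hv₂p, hv₂q, hwp]; ring
    rcases eq_or_ne j q with rfl | hjq
    · rw [hurwitzPow_apply_right, hv₂p, hv₂q, hwq]; ring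
    rw [hurwitzPow_apply_of_ne hjp hjq]
    rcases eq_or_ne j r with rfl | hjr
    · rw [hv₂r, hwr]
    calc v₂ j = v₁ j := hurwitzPow_apply_of_ne hjq hjr _ _
      _ = v j := hurwitzPow_apply_of_ne hjp hjq _ _
      _ = w j := (hw j hjp hjq hjr).symm
  rw [← hw_eq]
  exact ((hurwitzEquiv_hurwitzPow hpq _ v).trans (hurwitzEquiv_hurwitzPow hqr _ v₁)).trans
    (hurwitzEquiv_hurwitzPow hpq _ v₂)

theorem HurwitzEquiv.apply_eq_of_invariant {α : Type*} {f : (Fin n → ℤ) → α}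
    (hf : ∀ p q : Fin n, (p : ℕ) + 1 = q → ∀ u, f (hurwitzPow p q 1 u) = f u)
    (h : HurwitzEquiv v w) : f w = f v := by
  have move_invariant {u u' : Fin n → ℤ} (hu : IsHurwitzMove u u') : f u' = f u := by
    obtain ⟨p, q, hpq, rfl⟩ := isHurwitzMove_iff.1 hu
    exact hf p q hpq u
  induction h with
  | refl => rfl
  | tail _ hmove ih => exact (hmove.elim move_invariant fun h => (move_invariant h).symm).trans ih

theorem altSum_add (v w : Fin n → ℤ) : altSum (v + w) = altSum v + altSum w := by
  simp [altSum, mul_add, Finset.sum_add_distrib]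

theorem altSum_single (p : Fin n) (x : ℤ) : altSum (Pi.single p x) = (-1) ^ (p : ℕ) * x := by
  simp [altSum, Pi.single_apply]

theorem altSum_hurwitzPow {p q : Fin n} (hpq : (p : ℕ) + 1 = q) (k : ℤ) (v : Fin n → ℤ) :
    altSum (hurwitzPow p q k v) = altSum v := by
  have hpow : hurwitzPow p q k v =
      v + (Pi.single p (k * (v q - v p)) + Pi.single q (k * (v q - v p))) := by
    funext j
    simp only [hurwitzPow, Pi.add_apply, Pi.single_apply]
    grind
  rw [hpow, altSum_add, altSum_add, altSum_single, altSum_single, ← hpq]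
  ring

theorem dvd_dval_iff {d : ℕ} : d ∣ dval v ↔ ∀ i j, v i ≡ v j [ZMOD d] := by
  simp only [dval, Finset.dvd_gcd_iff, Finset.mem_univ, true_imp_iff, Prod.forall,
    ← Int.natCast_dvd, Int.modEq_iff_dvd]
  exact forall_comm

theorem dval_dvd_dval_hurwitzPow (p q : Fin n) (k : ℤ) (v : Fin n → ℤ) :
    dval v ∣ dval (hurwitzPow p q k v) := by
  have hmod : ∀ i j, v i ≡ v j [ZMOD dval v] := dvd_dval_iff.1 dvd_rfl
  have hpow (j : Fin n) : hurwitzPow p q k v j ≡ v j [ZMOD dval v] := by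
    have hδ : (dval v : ℤ) ∣ v q - v p := (hmod p q).dvd
    unfold hurwitzPow
    split_ifs
    · simpa using (Int.modEq_zero_iff_dvd.2 (hδ.mul_left k)).add_left (v j)
    · rfl
  exact dvd_dval_iff.2 fun i j => (hpow i).trans ((hmod i j).trans (hpow j).symm)

theorem dval_hurwitzPow (p q : Fin n) (k : ℤ) (v : Fin n → ℤ) :
    dval (hurwitzPow p q k v) = dval v := by
  refine Nat.dvd_antisymm ?_ (dval_dvd_dval_hurwitzPow p q k v)
  simpa [← hurwitzPow_add, hurwitzPow_zero] using
    dval_dvd_dval_hurwitzPow p q (-k) (hurwitzPow p q k v)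

theorem MresMod_hurwitzPow_one {p q : Fin n} {d : ℕ} (hd : v p ≡ v q [ZMOD d]) :
    MresMod (hurwitzPow p q 1 v) d = MresMod v d := by
  have hswap (j : Fin n) :
      hurwitzPow p q 1 v j % (2 * (d : ℤ)) = v (Equiv.swap p q j) % (2 * (d : ℤ)) := by
    rcases eq_or_ne j p with rfl | hjp
    · rw [hurwitzPow_apply_left, Equiv.swap_apply_left, one_mul, add_sub_cancel]
    rcases eq_or_ne j q with rfl | hjq
    · have hreflect : v p ≡ v j + 1 * (v j - v p) [ZMOD 2 * d] := by
        rw [Int.modEq_iff_dvd]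
        have hdouble : v j + 1 * (v j - v p) - v p = 2 * (v j - v p) := by ring
        exact hdouble ▸ mul_dvd_mul_left 2 hd.dvd
      rw [hurwitzPow_apply_right, Equiv.swap_apply_right]
      exact hreflect.symm
    · rw [hurwitzPow_apply_of_ne hjp hjq, Equiv.swap_apply_of_ne_of_ne hjp hjq]
  simp only [MresMod, hswap]
  conv_rhs => rw [← Multiset.map_univ_val_equiv (Equiv.swap p q), Multiset.map_map]
  rfl

theorem Mres_hurwitzPow_one (p q : Fin n) (v : Fin n → ℤ) :
    Mres (hurwitzPow p q 1 v) = Mres v := by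
  rw [Mres, Mres, dval_hurwitzPow]
  exact MresMod_hurwitzPow_one (dvd_dval_iff.1 dvd_rfl p q)

theorem HurwitzEquiv.altSum_eq (h : HurwitzEquiv v w) : altSum w = altSum v :=
  h.apply_eq_of_invariant fun _ _ hpq => altSum_hurwitzPow hpq 1

theorem HurwitzEquiv.dval_eq (h : HurwitzEquiv v w) : dval w = dval v :=
  h.apply_eq_of_invariant fun p q _ => dval_hurwitzPow p q 1

theorem HurwitzEquiv.Mres_eq (h : HurwitzEquiv v w) : Mres w = Mres v :=
  h.apply_eq_of_invariant fun p q _ => Mres_hurwitzPow_one p q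

theorem dval_eq_one_of_eq_zero_of_eq_one {p q : Fin n} (hp : v p = 0) (hq : v q = 1) :
    dval v = 1 := by
  have h : v p ≡ v q [ZMOD dval v] := dvd_dval_iff.1 dvd_rfl p q
  rw [hp, hq, Int.modEq_iff_dvd, sub_zero] at h
  exact Nat.dvd_one.1 (by exact_mod_cast h)

/-- The vector `(0, …, 0, 1, …, 1)` of length `n` whose first `i` entries are `0`. The first
vector of the theorem differs from it only in its `i`-th entry. -/
def stepVec (n i : ℕ) : Fin n → ℤ := fun j => if (j : ℕ) < i then 0 else 1

theorem altSum_stepVec {i : ℕ} (hin : i ≤ n) :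
    altSum (stepVec n i) = (if Even n then 0 else 1) - if Even i then 0 else 1 := by
  have hrange : altSum (stepVec n i) =
      ∑ j ∈ Finset.range n, (-1 : ℤ) ^ j * if j < i then 0 else 1 :=
    Fin.sum_univ_eq_sum_range (fun j => (-1 : ℤ) ^ j * if j < i then 0 else 1) n
  have hzeros : ∑ j ∈ Finset.range i, (-1 : ℤ) ^ j * (if j < i then 0 else 1) = 0 :=
    Finset.sum_eq_zero fun j hj => by rw [if_pos (Finset.mem_range.1 hj), mul_zero]
  have hones : ∑ j ∈ Finset.Ico i n, (-1 : ℤ) ^ j * (if j < i then 0 else 1) =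
      ∑ j ∈ Finset.Ico i n, (-1 : ℤ) ^ j :=
    Finset.sum_congr rfl fun j hj => by rw [if_neg (Finset.mem_Ico.1 hj).1.not_gt, mul_one]
  rw [hrange, ← Finset.sum_range_add_sum_Ico _ hin, hzeros, hones, zero_add,
    Finset.sum_Ico_eq_sub _ hin, neg_one_geom_sum, neg_one_geom_sum]

theorem map_stepVec_univ {i : ℕ} (hin : i ≤ n) :
    (Finset.univ.val : Multiset (Fin n)).map (stepVec n i) =
      Multiset.replicate i 0 + Multiset.replicate (n - i) 1 := by
  obtain ⟨k, rfl⟩ := Nat.exists_eq_add_of_le hin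
  rw [Fin.univ_val_map, List.ofFn_add]
  simp [stepVec, List.ofFn_const, ← Multiset.coe_add, ← Multiset.coe_replicate]

theorem Mres_eq_of_modEq_stepVec {i : ℕ} (hin : i ≤ n) (hd : dval v = 1)
    (hv : ∀ j, v j ≡ stepVec n i j [ZMOD 2]) :
    Mres v = Multiset.replicate i 0 + Multiset.replicate (n - i) 1 := by
  rw [← map_stepVec_univ hin, Mres, MresMod, hd]
  have hstep (j : Fin n) : stepVec n i j % 2 = stepVec n i j := by
    unfold stepVec
    split_ifs <;> rfl
  exact Multiset.map_congr rfl fun j _ => Eq.trans (hv j) (hstep j)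

end HurwitzInvariants

/-- For even i with 1 < i < 2m (1-indexed), the vectors
v = (0,…,0, 2n, 1,…,1) and v' = (0,…,0, n, 1−n, 1,…,1) are Hurwitz equivalent;
in particular Δ(v) = Δ(v') = −2n, d(v) = d(v') = 1, and
M(v) = M(v') = {0 (i times), 1 (2m−i times) (mod 2)}. -/
theorem stmt_16 (m : ℕ) (hm : 2 ≤ m) (i : ℕ) (hi1 : 1 < i) (hi2 : i < 2 * m)
    (hie : Even i) (c : ℤ)
    (v v' : Fin (2 * m) → ℤ)
    (hv : ∀ j : Fin (2 * m), v j =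
      if (j : ℕ) + 1 < i then 0 else if (j : ℕ) + 1 = i then 2 * c else 1)
    (hv' : ∀ j : Fin (2 * m), v' j =
      if (j : ℕ) + 1 < i then 0 else if (j : ℕ) + 1 = i then c
      else if (j : ℕ) + 1 = i + 1 then 1 - c else 1) :
    HurwitzEquiv v v' ∧
    altSum v = -2 * c ∧ altSum v' = -2 * c ∧
    dval v = 1 ∧ dval v' = 1 ∧
    Mres v = Multiset.replicate i (0 : ℤ) + Multiset.replicate (2 * m - i) (1 : ℤ) ∧
    Mres v' = Multiset.replicate i (0 : ℤ) + Multiset.replicate (2 * m - i) (1 : ℤ) := by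
  have hequiv : HurwitzEquiv v v' := by
    refine .of_middle_eq (p := ⟨i - 2, by omega⟩) (q := ⟨i - 1, by omega⟩) (r := ⟨i, hi2⟩)
      (c := c) ?_ ?_ ?_ ?_ ?_ ?_ ?_ <;> simp only [hv, hv', ne_eq, Fin.ext_iff] <;> grind
  have hv_eq : v = stepVec (2 * m) i + Pi.single ⟨i - 1, by omega⟩ (2 * c) := by
    funext j
    simp only [hv, stepVec, Pi.add_apply, Pi.single_apply, Fin.ext_iff]
    grind
  have hΔ : altSum v = -2 * c := by
    have hodd : Odd (i - 1) := Nat.Even.sub_odd hi1.le hie odd_one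
    simp [hv_eq, altSum_add, altSum_stepVec hi2.le, altSum_single, hie, hodd.neg_one_pow]
  have hd : dval v = 1 :=
    dval_eq_one_of_eq_zero_of_eq_one (p := ⟨0, by omega⟩) (q := ⟨i, hi2⟩)
      (by simp [hv, hi1]) (by simp [hv])
  have hM : Mres v = Multiset.replicate i 0 + Multiset.replicate (2 * m - i) 1 := by
    refine Mres_eq_of_modEq_stepVec hi2.le hd fun j => ?_
    simp only [hv_eq, Pi.add_apply, Pi.single_apply]
    split_ifs <;> simp [Int.ModEq]
  exact ⟨hequiv, hΔ, hequiv.altSum_eq.trans hΔ, hd, hequiv.dval_eq.trans hd, hM,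
    hequiv.Mres_eq.trans hM⟩
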